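/- arXiv:1712.08453 — 6 statements merged into one kernel-verified Lean document; each statement's English description precedes it below -/
import Mathlib

section
/- Assume the Hodge-index condition holds for T. If g preserves T and g is unipotent (i.e. (g − id)^(dim V) = 0), then (g − id)⁵ = 0; equivalently, every Jordan block of g (for the eigenvalue 1) has dimension at most 5. -/
/-!
Let `a`, `b` be elements of a commutative ring with `a ^ p = b ^ q = (a + b) ^ r = 0`. The
polynomial `(a X + b) ^ d = (a (X - 1) + (a + b)) ^ d` has degree less than `p`, and is divisible by
`X ^ (d + 1 - q)` and by `(X - 1) ^ (d + 1 - r)`, hence by their product. If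
`p + q + r ≤ 2 d + 2`, it is therefore zero, so all products `a ^ i b ^ j` with `i + j = d` vanish
up to binomial factors.

A bilinear map `B` with `B (g x) (g' y) = h (B x y)`, where `g`, `g'`, `h` are unipotent, is a
vector on which two commuting unipotent substitutions have a unipotent product; after the change of
variables `a = (u - 1) v`, `b = v - 1`, `a + b = u v - 1` this is the situation above. Taking
`B = T` with `h` the inverse transpose of `g`, and `N = g - 1` with `N ^ (n + 6) = 0`, the bound
reads `3 (n + 6) ≤ 4 (n + 4) + 2`, so `T (N ^ (n + 4) x) (N ^ (n + 4) y) = 0`. If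
`N ^ (n + 5) v ≠ 0`, then `N ^ (n + 4) v` and `N ^ (n + 5) v` violate the Hodge-index condition.
-/

section CommSemiring

open Polynomial

variable {R : Type*} [CommSemiring R] {a c : R} {p q : ℕ}

theorem coeff_C_mul_X_add_C_pow (a b : R) (d i : ℕ) :
    ((C a * X + C b) ^ d).coeff i = a ^ i * b ^ (d - i) * d.choose i := by
  have comp_eq : (X + C b).comp (C a * X) = C a * X + C b := by simp
  rw [← comp_eq, ← pow_comp, comp_C_mul_X_coeff, coeff_X_add_C_pow]
  ring

theorem degree_C_mul_X_add_C_pow_lt (b : R) (ha : a ^ p = 0) (d : ℕ) :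
    degree ((C a * X + C b) ^ d) < p := by
  refine (degree_lt_iff_coeff_zero _ p).2 fun i hi => ?_
  rw [coeff_C_mul_X_add_C_pow, pow_eq_zero_of_le hi ha, zero_mul, zero_mul]

theorem pow_dvd_mul_add_pow (a b : R) (hc : c ^ q = 0) (d : ℕ) :
    b ^ (d + 1 - q) ∣ (a * b + c) ^ d := by
  obtain hq | hq := le_total (d + 1) q
  · rw [Nat.sub_eq_zero_of_le hq, pow_zero]
    exact one_dvd _
  · have dvd_pow : (a * b) ^ (d + 1 - q) ∣ (a * b + c) ^ d :=
      (Commute.all (a * b) c).pow_dvd_add_pow_of_pow_eq_zero_right (by omega) hc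
    exact (pow_dvd_pow_of_dvd (dvd_mul_left b a) _).trans dvd_pow

end CommSemiring

section CommRing

open Polynomial

variable {R : Type*} [CommRing R] {a b : R} {p q r d i j : ℕ}

theorem X_pow_mul_X_sub_C_one_pow_dvd (hb : b ^ q = 0) (hab : (a + b) ^ r = 0) (d : ℕ) :
    (X ^ (d + 1 - q) * (X - C 1) ^ (d + 1 - r) : R[X]) ∣ (C a * X + C b) ^ d := by
  have coprime : IsCoprime (X : R[X]) (X - C 1) := ⟨1, -1, by rw [C_1]; ring⟩
  have X_pow_dvd : (X ^ (d + 1 - q) : R[X]) ∣ (C a * X + C b) ^ d :=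
    pow_dvd_mul_add_pow _ _ (by rw [← C_pow, hb, C_0]) d
  have X_sub_C_one_pow_dvd : ((X - C 1) ^ (d + 1 - r) : R[X]) ∣ (C a * X + C b) ^ d := by
    have recenter : C a * X + C b = C a * (X - C 1) + C (a + b) := by
      rw [C_add, C_1]
      ring
    rw [recenter]
    exact pow_dvd_mul_add_pow _ _ (by rw [← C_pow, hab, C_0]) d
  exact coprime.pow.mul_dvd X_pow_dvd X_sub_C_one_pow_dvd

theorem C_mul_X_add_C_pow_eq_zero (ha : a ^ p = 0) (hb : b ^ q = 0) (hab : (a + b) ^ r = 0)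
    (hd : p + q + r ≤ 2 * d + 2) : (C a * X + C b) ^ d = 0 := by
  nontriviality R
  have monic : (X ^ (d + 1 - q) * (X - C 1) ^ (d + 1 - r) : R[X]).Monic :=
    (monic_X_pow _).mul ((monic_X_sub_C 1).pow _)
  by_contra hne
  refine monic.not_dvd_of_degree_lt hne ?_ (X_pow_mul_X_sub_C_one_pow_dvd hb hab d)
  have degree_eq : degree (X ^ (d + 1 - q) * (X - C 1) ^ (d + 1 - r) : R[X]) =
      ((d + 1 - q + (d + 1 - r) : ℕ) : WithBot ℕ) := by
    rw [degree_eq_natDegree monic.ne_zero, (monic_X_pow _).natDegree_mul ((monic_X_sub_C 1).pow _),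
      natDegree_X_pow, (monic_X_sub_C 1).natDegree_pow, natDegree_X_sub_C, mul_one]
  rw [degree_eq]
  refine (degree_C_mul_X_add_C_pow_lt b ha d).trans_le ?_
  exact_mod_cast (by omega : p ≤ d + 1 - q + (d + 1 - r))

theorem choose_mul_pow_mul_pow_eq_zero (ha : a ^ p = 0) (hb : b ^ q = 0) (hab : (a + b) ^ r = 0)
    (hij : p + q + r ≤ 2 * (i + j) + 2) : ((i + j).choose i : R) * (a ^ i * b ^ j) = 0 := by
  have h := coeff_C_mul_X_add_C_pow a b (i + j) i
  rw [C_mul_X_add_C_pow_eq_zero ha hb hab hij, coeff_zero, Nat.add_sub_cancel_left] at h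
  rw [mul_comm, ← h]

theorem choose_mul_sub_one_pow_mul_sub_one_pow_eq_zero {u v : R} (hu : (u - 1) ^ p = 0)
    (hv : (v - 1) ^ q = 0) (huv : (u * v - 1) ^ r = 0) (hij : p + q + r ≤ 2 * (i + j) + 2) :
    ((i + j).choose i : R) * ((u - 1) ^ i * (v - 1) ^ j) = 0 := by
  have isUnit_v : IsUnit v := by
    simpa only [sub_add_cancel] using IsNilpotent.isUnit_add_one (r := v - 1) ⟨q, hv⟩
  have hu' : ((u - 1) * v) ^ p = 0 := by rw [mul_pow, hu, zero_mul]
  have huv' : ((u - 1) * v + (v - 1)) ^ r = 0 := by rw [← huv]; ring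
  have h := choose_mul_pow_mul_pow_eq_zero hu' hv huv' hij
  refine (isUnit_v.pow i).mul_right_cancel ?_
  rw [zero_mul, ← h, mul_pow]
  ring

end CommRing

section Module

variable {R M : Type*} [AddCommGroup M] {p q r i j : ℕ} {u v : R} {m : M}

theorem choose_smul_sub_one_pow_smul_eq_zero [CommRing R] [Module R M]
    (hu : (u - 1) ^ p • m = 0) (hv : (v - 1) ^ q • m = 0) (huv : (u * v - 1) ^ r • m = 0)
    (hij : p + q + r ≤ 2 * (i + j) + 2) :
    (i + j).choose i • ((u - 1) ^ i * (v - 1) ^ j) • m = 0 := by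
  have h := choose_mul_sub_one_pow_mul_sub_one_pow_eq_zero (i := i) (j := j)
    (u := Ideal.Quotient.mk (Ideal.torsionOf R M m) u) (v := Ideal.Quotient.mk _ v)
    (Ideal.Quotient.eq_zero_iff_mem.2 hu) (Ideal.Quotient.eq_zero_iff_mem.2 hv)
    (Ideal.Quotient.eq_zero_iff_mem.2 huv) hij
  have mem_torsionOf :
      ((i + j).choose i : R) * ((u - 1) ^ i * (v - 1) ^ j) ∈ Ideal.torsionOf R M m :=
    Ideal.Quotient.eq_zero_iff_mem.1 (by simpa using h)
  rwa [Ideal.mem_torsionOf_iff, mul_smul, Nat.cast_smul_eq_nsmul] at mem_torsionOf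

open scoped IsMulCommutative in
theorem choose_smul_sub_one_pow_smul_eq_zero_of_commute [Ring R] [Module R M]
    (h_comm : Commute u v) (hu : (u - 1) ^ p • m = 0) (hv : (v - 1) ^ q • m = 0)
    (huv : (u * v - 1) ^ r • m = 0) (hij : p + q + r ≤ 2 * (i + j) + 2) :
    (i + j).choose i • ((u - 1) ^ i * (v - 1) ^ j) • m = 0 := by
  have : IsMulCommutative (Subring.closure {u, v}) := Subring.isMulCommutative_closure <| by
    rintro x (rfl | rfl) y (rfl | rfl)
    exacts [rfl, h_comm, h_comm.symm, rfl]
  exact choose_smul_sub_one_pow_smul_eq_zero (R := Subring.closure {u, v})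
    (u := ⟨u, Subring.subset_closure (.inl rfl)⟩) (v := ⟨v, Subring.subset_closure (.inr rfl)⟩)
    hu hv huv hij

end Module

theorem sub_one_pow_eq_zero_of_mul_eq_one {R : Type*} [Ring R] {u v : R} {n : ℕ}
    (huv : u * v = 1) (hvu : v * u = 1) (hu : (u - 1) ^ n = 0) : (v - 1) ^ n = 0 := by
  have h_comm : Commute v (u - 1) := Commute.sub_right (hvu.trans huv.symm) (.one_right v)
  have sub_one_eq : v - 1 = -(v * (u - 1)) := by rw [mul_sub_one, hvu, neg_sub]
  rw [sub_one_eq, neg_pow, h_comm.mul_pow, hu, mul_zero, mul_zero]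

section LinearMap

variable {K V V' W : Type*} [CommRing K] [AddCommGroup V] [Module K V] [AddCommGroup V']
  [Module K V'] [AddCommGroup W] [Module K W] {p q r i j : ℕ}

theorem lcomp_sub_one_pow (g : Module.End K V) (n : ℕ) :
    (LinearMap.lcomp K W g - 1) ^ n = LinearMap.lcomp K W ((g - 1) ^ n) := by
  induction n with
  | zero => rfl
  | succ n ih =>
    rw [pow_succ, ih, pow_succ']
    ext f x
    simp

theorem llcomp_sub_one_pow (h : Module.End K W) (n : ℕ) :
    (LinearMap.llcomp K V W W h - 1 : Module.End K (V →ₗ[K] W)) ^ n =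
      LinearMap.llcomp K V W W ((h - 1) ^ n) := by
  induction n with
  | zero => rfl
  | succ n ih =>
    rw [pow_succ, ih, pow_succ]
    ext f x
    simp

theorem lcomp_mul_llcomp_sub_one_pow_apply {B : V →ₗ[K] V' →ₗ[K] W} {g : Module.End K V}
    {g' : Module.End K V'} {h : Module.End K W} (hB : ∀ x y, B (g x) (g' y) = h (B x y)) (n : ℕ) :
    ((LinearMap.lcomp K _ g * LinearMap.llcomp K V _ _ (LinearMap.lcomp K W g') - 1 :
      Module.End K (V →ₗ[K] V' →ₗ[K] W)) ^ n) B = B.compr₂ ((h - 1) ^ n) := by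
  induction n with
  | zero => rfl
  | succ n ih =>
    rw [pow_succ', Module.End.mul_apply, ih, pow_succ]
    ext x y
    simp [hB]

theorem choose_smul_apply_sub_one_pow_eq_zero {B : V →ₗ[K] V' →ₗ[K] W} {g : Module.End K V}
    {g' : Module.End K V'} {h : Module.End K W} (hB : ∀ x y, B (g x) (g' y) = h (B x y))
    (hg : (g - 1) ^ p = 0) (hg' : (g' - 1) ^ q = 0) (hh : (h - 1) ^ r = 0)
    (hij : p + q + r ≤ 2 * (i + j) + 2) (x : V) (y : V') :
    (i + j).choose i • B (((g - 1) ^ i) x) (((g' - 1) ^ j) y) = 0 := by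
  let u : Module.End K (V →ₗ[K] V' →ₗ[K] W) := LinearMap.lcomp K _ g
  let v : Module.End K (V →ₗ[K] V' →ₗ[K] W) := LinearMap.llcomp K V _ _ (LinearMap.lcomp K W g')
  have u_sub_one_pow (n : ℕ) : (u - 1) ^ n = LinearMap.lcomp K _ ((g - 1) ^ n) :=
    lcomp_sub_one_pow g n
  have v_sub_one_pow (n : ℕ) :
      (v - 1) ^ n = LinearMap.llcomp K V _ _ (LinearMap.lcomp K W ((g' - 1) ^ n)) := by
    rw [← lcomp_sub_one_pow, ← llcomp_sub_one_pow]
  have hu : (u - 1) ^ p • B = 0 := by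
    ext
    simp [u_sub_one_pow, hg]
  have hv : (v - 1) ^ q • B = 0 := by
    ext
    simp [v_sub_one_pow, hg']
  have huv : (u * v - 1) ^ r • B = 0 := by
    rw [Module.End.smul_def, lcomp_mul_llcomp_sub_one_pow_apply hB, hh]
    rfl
  have h_comm : Commute u v := rfl
  have key := choose_smul_sub_one_pow_smul_eq_zero_of_commute
    (R := Module.End K (V →ₗ[K] V' →ₗ[K] W)) h_comm hu hv huv hij
  rw [u_sub_one_pow, v_sub_one_pow] at key
  exact LinearMap.congr_fun₂ key x y

end LinearMap

theorem linearIndependent_pair_apply {K V : Type*} [DivisionRing K] [AddCommGroup V]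
    [Module K V] {f : V →ₗ[K] V} {x : V} (hfx : f x ≠ 0) (hffx : f (f x) = 0) :
    LinearIndependent K ![x, f x] := by
  rw [LinearIndependent.pair_iff]
  intro s t hst
  have hs : s = 0 := by
    have h := congrArg f hst
    simpa [hffx, hfx] using h
  simpa [hs, hfx] using hst

section Trilinear

variable {K V W : Type*} [Field K] [CharZero K] [AddCommGroup V] [Module K V] [AddCommGroup W]
  [Module K W] {T : V →ₗ[K] V →ₗ[K] V →ₗ[K] W} {g : V ≃ₗ[K] V}

theorem apply_sub_one_pow_apply_sub_one_pow_eq_zero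
    (hgT : ∀ u v w, T (g u) (g v) (g w) = T u v w) {m n : ℕ}
    (hg : ((g : Module.End K V) - 1) ^ m = 0) (hmn : 3 * m ≤ 4 * n + 2) (x y : V) :
    T ((((g : Module.End K V) - 1) ^ n) x) ((((g : Module.End K V) - 1) ^ n) y) = 0 := by
  let h : Module.End K (V →ₗ[K] W) := LinearMap.lcomp K W (g.symm : Module.End K V)
  have hT (x y : V) : T (g x) (g y) = h (T x y) := by
    ext z
    simpa [h] using hgT x y (g.symm z)
  have g_symm_unipotent : ((g.symm : Module.End K V) - 1) ^ m = 0 :=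
    sub_one_pow_eq_zero_of_mul_eq_one g.comp_symm g.symm_comp hg
  have h_unipotent : (h - 1) ^ m = 0 := by
    rw [lcomp_sub_one_pow, g_symm_unipotent]
    ext
    simp
  have key := choose_smul_apply_sub_one_pow_eq_zero (i := n) (j := n) hT hg hg h_unipotent
    (by omega) x y
  rw [← Nat.cast_smul_eq_nsmul K] at key
  exact (smul_eq_zero.1 key).resolve_left
    (Nat.cast_ne_zero.2 (Nat.choose_pos (Nat.le_add_right n n)).ne')

theorem sub_one_pow_add_five_eq_zero
    (hHodge : ∀ u v : V, LinearIndependent K ![u, v] →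
      ∃ w, T u u w ≠ 0 ∨ T u v w ≠ 0 ∨ T v v w ≠ 0)
    (hgT : ∀ u v w, T (g u) (g v) (g w) = T u v w) {n : ℕ}
    (hg : ((g : Module.End K V) - 1) ^ (n + 6) = 0) :
    ((g : Module.End K V) - 1) ^ (n + 5) = 0 := by
  have T_eq_zero := apply_sub_one_pow_apply_sub_one_pow_eq_zero hgT hg (n := n + 4) (by omega)
  set N : Module.End K V := (g : Module.End K V) - 1
  ext v
  by_contra hv
  have apply_ne_zero : N ((N ^ (n + 4)) v) ≠ 0 := by
    rwa [← Module.End.mul_apply, ← pow_succ']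
  have apply_apply_eq_zero : N (N ((N ^ (n + 4)) v)) = 0 := by
    rw [← Module.End.mul_apply N (N ^ _), ← Module.End.mul_apply, ← pow_succ', ← pow_succ', hg,
      LinearMap.zero_apply]
  have apply_eq : N ((N ^ (n + 4)) v) = (N ^ (n + 4)) (N v) := by
    rw [← Module.End.mul_apply, ← pow_succ', pow_succ, Module.End.mul_apply]
  obtain ⟨w, hw⟩ := hHodge _ _ (linearIndependent_pair_apply apply_ne_zero apply_apply_eq_zero)
  simp [apply_eq, T_eq_zero] at hw

theorem stmt1_general
    (hHodge : ∀ u v : V, LinearIndependent K ![u, v] →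
      ∃ w, T u u w ≠ 0 ∨ T u v w ≠ 0 ∨ T v v w ≠ 0)
    (hgT : ∀ u v w, T (g u) (g v) (g w) = T u v w)
    (hunip : IsNilpotent ((g : Module.End K V) - 1)) :
    ((g : Module.End K V) - 1) ^ 5 = 0 := by
  obtain ⟨n, hn⟩ := hunip
  induction n with
  | zero => exact pow_eq_zero_of_le (Nat.zero_le 5) hn
  | succ n ih =>
    obtain hn5 | hn5 := Nat.lt_or_ge n 5
    · exact pow_eq_zero_of_le hn5 hn
    · obtain ⟨k, rfl⟩ := Nat.exists_eq_add_of_le' hn5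
      exact ih (sub_one_pow_add_five_eq_zero hHodge hgT hn)

end Trilinear

/-- abstract form of Theorem 3.1(1): if `T` is a symmetric trilinear form on a
finite-dimensional real vector space satisfying the Hodge-index condition, and `g` is a
unipotent linear automorphism preserving `T`, then `(g - id)⁵ = 0`, i.e. every Jordan block
of `g` (for the eigenvalue 1) has dimension at most 5. -/
theorem stmt1 (V : Type*) [AddCommGroup V] [Module ℝ V] [FiniteDimensional ℝ V]
    (T : V →ₗ[ℝ] V →ₗ[ℝ] V →ₗ[ℝ] ℝ)
    (hT1 : ∀ u v w, T u v w = T v u w)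
    (hT2 : ∀ u v w, T u v w = T u w v)
    (hHodge : ∀ u v : V, LinearIndependent ℝ ![u, v] →
      ∃ w, T u u w ≠ 0 ∨ T u v w ≠ 0 ∨ T v v w ≠ 0)
    (g : V ≃ₗ[ℝ] V)
    (hgT : ∀ u v w, T (g u) (g v) (g w) = T u v w)
    (hunip : ((g : Module.End ℝ V) - 1) ^ (Module.finrank ℝ V) = 0) :
    ((g : Module.End ℝ V) - 1) ^ 5 = 0 :=
  stmt1_general hHodge hgT ⟨_, hunip⟩
end

section
/- Assume the Hodge-index condition holds for T. Suppose g preserves T, g is unipotent, and g ≠ id. Let N = g − id and let k ≥ 2 be the least positive integer with N^k = 0. Then rank(N^(k−1)) = 1, and rank(N^j) = k − j for every integer j with k + 1 ≤ 2j and j ≤ k. Equivalently, g has a unique Jordan block of maximal dimension k, and every other Jordan block of g has dimension at most (k+1)/2. -/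
/-!
Write `N = g - 1` and regard `T` as a bilinear map from `V` to its dual, on which `g` acts through
the transpose `f` of `g⁻¹`; along with `N ^ k`, also `(f - 1) ^ k` vanishes. Since
`g ⊗ g - 1 = N ⊗ 1 + g ⊗ N`, the binomial theorem computes `(f - 1) ^ (a + b)` on `T x y`. If
`N ^ (a + 1) x = 0` and `N ^ (b + 1) y = 0`, a single term survives, a positive multiple of
`T (N ^ a x) (N ^ b y)`. For `2 * j ≥ k` this makes the subspace `range (N ^ j) ⊓ ker N` totally
isotropic, so that the Hodge-index condition bounds its dimension by one. That dimension is the rank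
drop from `N ^ j` to `N ^ (j + 1)`, and it is positive for `j < k`.
-/

open Finset LinearMap Module

section Equivariant

variable {R E F G : Type*} [CommRing R] [AddCommGroup E] [AddCommGroup F] [AddCommGroup G]
  [Module R E] [Module R F] [Module R G] {B : E →ₗ[R] F →ₗ[R] G}
  {g : End R E} {h : End R F} {f : End R G}

theorem sub_one_pow_apply_eq_sum_of_equivariant (hB : ∀ x y, B (g x) (h y) = f (B x y))
    (n : ℕ) (x : E) (y : F) :
    ((f - 1) ^ n) (B x y) =
      ∑ ij ∈ antidiagonal n,
        n.choose ij.1 • B (((g - 1) ^ ij.1) ((g ^ ij.2) x)) (((h - 1) ^ ij.2) y) := by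
  have intertwine : (f - 1) ∘ₗ TensorProduct.lift B =
      TensorProduct.lift B ∘ₗ (TensorProduct.map g h - 1) := by
    ext x y
    simp [hB]
  have split : TensorProduct.map g h - 1 =
      TensorProduct.map (g - 1) 1 + TensorProduct.map g (h - 1) := by
    ext x y
    simp [TensorProduct.sub_tmul, TensorProduct.tmul_sub]
  have commute : Commute (TensorProduct.map (g - 1) (1 : End R F))
      (TensorProduct.map g (h - 1)) := by
    simp only [Commute, SemiconjBy, ← TensorProduct.map_mul, one_mul, mul_one, sub_mul, mul_sub]
  have power := congr($(End.commute_pow_left_of_commute intertwine n) (x ⊗ₜ[R] y))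
  rw [split, commute.add_pow'] at power
  simpa [TensorProduct.map_pow, ← TensorProduct.map_mul] using power

theorem sub_one_pow_apply_eq_choose_smul_of_equivariant (hB : ∀ x y, B (g x) (h y) = f (B x y))
    {a b : ℕ} {x : E} {y : F} (hx : ((g - 1) ^ (a + 1)) x = 0) (hy : ((h - 1) ^ (b + 1)) y = 0) :
    ((f - 1) ^ (a + b)) (B x y) =
      (a + b).choose a • B (((g - 1) ^ a) x) (((h - 1) ^ b) y) := by
  have commute (i j : ℕ) : ((g - 1) ^ i) ((g ^ j) x) = (g ^ j) (((g - 1) ^ i) x) :=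
    congr($((((Commute.refl g).sub_left (Commute.one_left g)).pow_pow i j).eq) x)
  have fixed : (g ^ b) (((g - 1) ^ a) x) = ((g - 1) ^ a) x := by
    rw [pow_succ'] at hx
    rw [End.pow_apply]
    exact Function.iterate_fixed (sub_eq_zero.mp hx) b
  rw [sub_one_pow_apply_eq_sum_of_equivariant hB, sum_eq_single (a, b)]
  · rw [commute, fixed]
  · rintro ⟨i, j⟩ hij hne
    rw [HasAntidiagonal.mem_antidiagonal] at hij
    obtain hi | hj : a + 1 ≤ i ∨ b + 1 ≤ j := by grind
    · simp [commute, End.pow_map_zero_of_le hi hx]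
    · simp [End.pow_map_zero_of_le hj hy]
  · simp

theorem apply_sub_one_pow_eq_zero_of_equivariant [IsAddTorsionFree G]
    (hB : ∀ x y, B (g x) (h y) = f (B x y)) {k a b : ℕ} (hf : (f - 1) ^ k = 0) (hk : k ≤ a + b)
    {x : E} {y : F} (hx : ((g - 1) ^ (a + 1)) x = 0) (hy : ((h - 1) ^ (b + 1)) y = 0) :
    B (((g - 1) ^ a) x) (((h - 1) ^ b) y) = 0 := by
  have leading := sub_one_pow_apply_eq_choose_smul_of_equivariant hB hx hy
  rw [pow_eq_zero_of_le hk hf, LinearMap.zero_apply, eq_comm] at leading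
  exact (nsmul_eq_zero_iff_right (Nat.choose_pos (Nat.le_add_right a b)).ne').mp leading

end Equivariant

section RankOfPowers

universe u

variable {K : Type*} {V W : Type u} [Field K] [AddCommGroup V] [Module K V]
  [AddCommGroup W] [Module K W]

theorem rank_map_add_rank_inf_ker (f : V →ₗ[K] W) (p : Submodule K V) :
    Module.rank K (p.map f) + Module.rank K ↥(p ⊓ ker f) = Module.rank K p := by
  rw [← rank_range_add_rank_ker (f.domRestrict p), range_domRestrict, ker_domRestrict,
    ← Submodule.map_comap_subtype, rank_map_eq p.injective_subtype]

theorem rank_pow_succ_add_rank_inf_ker (N : End K V) (j : ℕ) :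
    (N ^ (j + 1)).rank + Module.rank K ↥(range (N ^ j) ⊓ ker N) = (N ^ j).rank := by
  have rank_drop := rank_map_add_rank_inf_ker N (range (N ^ j))
  rwa [← range_comp, ← End.mul_eq_comp, ← pow_succ'] at rank_drop

theorem range_pow_inf_ker_ne_bot {N : End K V} (hN : IsNilpotent N) {j : ℕ} (hj : N ^ j ≠ 0) :
    range (N ^ j) ⊓ ker N ≠ ⊥ := by
  have : Nontrivial (End K V) := ⟨_, _, hj⟩
  obtain ⟨n, hn⟩ := Nat.exists_eq_succ_of_ne_zero (pos_nilpotencyClass_iff.mpr hN).ne'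
  obtain ⟨pow_succ_eq_zero, pow_ne_zero⟩ := nilpotencyClass_eq_succ_iff.mp hn
  have hjn : j ≤ n := by
    by_contra! hnj
    exact hj (pow_eq_zero_of_le hnj pow_succ_eq_zero)
  have range_le : range (N ^ n) ≤ range (N ^ j) ⊓ ker N := by
    refine le_inf (N.iterateRange.monotone hjn) ?_
    rw [range_le_ker_iff, ← End.mul_eq_comp, ← pow_succ', pow_succ_eq_zero]
  exact ne_bot_of_le_ne_bot (mt range_eq_bot.mp pow_ne_zero) range_le

theorem rank_pow_eq_sub_of_rank_inf_ker_eq_one {N : End K V} {k m : ℕ} (hN : N ^ k = 0)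
    (hdrop : ∀ j, m ≤ j → j < k → Module.rank K ↥(range (N ^ j) ⊓ ker N) = 1)
    {j : ℕ} (hmj : m ≤ j) (hjk : j ≤ k) : (N ^ j).rank = (k - j : ℕ) := by
  induction hjk using Nat.decreasingInduction with
  | self => simp [hN]
  | of_succ j hjk ih =>
    rw [← rank_pow_succ_add_rank_inf_ker, hdrop j hmj hjk, ih (by lia)]
    norm_cast
    lia

end RankOfPowers

section HodgeIndex

variable {K V M : Type*} [Field K] [AddCommGroup V] [Module K V] [AddCommGroup M] [Module K M]

/-- The Hodge-index condition for a bilinear map `B` on `V`: totally isotropic subspaces have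
dimension at most one. A trilinear form is read as a bilinear map into the dual of `V`. -/
def HodgeIndex (B : V →ₗ[K] V →ₗ[K] M) : Prop :=
  ∀ p : Submodule K V, (∀ x ∈ p, ∀ y ∈ p, B x y = 0) → Module.rank K p ≤ 1

theorem hodgeIndex_of_linearIndependent_pair {B : V →ₗ[K] V →ₗ[K] M}
    (hB : ∀ u v, LinearIndependent K ![u, v] → ¬(B u u = 0 ∧ B u v = 0 ∧ B v v = 0)) :
    HodgeIndex B := by
  intro p isotropic
  by_contra! one_lt_rank
  have : Nontrivial p := rank_pos_iff_nontrivial.mp (zero_lt_one.trans one_lt_rank)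
  obtain ⟨u, hu⟩ := exists_ne (0 : p)
  obtain ⟨v, huv⟩ := exists_linearIndependent_pair_of_one_lt_rank one_lt_rank hu
  have independent : LinearIndependent K ![(u : V), (v : V)] := by
    simpa [LinearIndependent.pair_iff, Subtype.ext_iff] using huv
  exact hB u v independent
    ⟨isotropic u u.2 u u.2, isotropic u u.2 v v.2, isotropic v v.2 v v.2⟩

theorem isotropic_range_pow_inf_ker [IsAddTorsionFree M] {B : V →ₗ[K] V →ₗ[K] M}
    {g : End K V} {f : End K M}
    (hgf : ∀ x y, B (g x) (g y) = f (B x y)) {k j : ℕ} (hf : (f - 1) ^ k = 0) (hkj : k ≤ 2 * j) :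
    ∀ x ∈ range ((g - 1) ^ j) ⊓ ker (g - 1), ∀ y ∈ range ((g - 1) ^ j) ⊓ ker (g - 1),
      B x y = 0 := by
  rintro _ ⟨⟨x, rfl⟩, hx⟩ _ ⟨⟨y, rfl⟩, hy⟩
  exact apply_sub_one_pow_eq_zero_of_equivariant hgf hf (by lia)
    (by rwa [pow_succ']) (by rwa [pow_succ'])

theorem HodgeIndex.rank_sub_one_pow_eq [IsAddTorsionFree M] {B : V →ₗ[K] V →ₗ[K] M}
    (hB : HodgeIndex B) {g : End K V} {f : End K M} (hgf : ∀ x y, B (g x) (g y) = f (B x y))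
    {k : ℕ} (hg : (g - 1) ^ k = 0) (hf : (f - 1) ^ k = 0)
    (hkmin : ∀ m, 0 < m → (g - 1) ^ m = 0 → k ≤ m) {j : ℕ} (hkj : k ≤ 2 * j) (hjk : j ≤ k) :
    ((g - 1) ^ j).rank = (k - j : ℕ) := by
  refine rank_pow_eq_sub_of_rank_inf_ker_eq_one hg (fun i hji hik ↦ le_antisymm ?_ ?_) le_rfl hjk
  · exact hB _ (isotropic_range_pow_inf_ker hgf hf (by lia))
  · have pow_ne_zero : (g - 1) ^ i ≠ 0 := fun h ↦ hik.not_ge (hkmin i (by lia) h)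
    rw [Cardinal.one_le_iff_pos, rank_pos_iff_nontrivial, Submodule.nontrivial_iff_ne_bot]
    exact range_pow_inf_ker_ne_bot ⟨k, hg⟩ pow_ne_zero

end HodgeIndex

theorem inv_sub_one_pow_eq_zero {R : Type*} [Ring R] {u : Rˣ} {k : ℕ}
    (hu : ((u : R) - 1) ^ k = 0) : ((↑u⁻¹ : R) - 1) ^ k = 0 := by
  have factor : (↑u⁻¹ : R) - 1 = -↑u⁻¹ * (u - 1) := by
    rw [neg_mul, mul_sub, Units.inv_mul, mul_one, neg_sub]
  have commute : Commute (-↑u⁻¹ : R) (u - 1) :=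
    ((Commute.refl (u : R)).units_inv_left.sub_right (.one_right _)).neg_left
  rw [factor, commute.mul_pow, hu, mul_zero]

theorem dualMap_sub_one_pow {R V : Type*} [CommRing R] [AddCommGroup V] [Module R V]
    (h : End R V) (n : ℕ) :
    ((dualMap h : End R (Dual R V)) - 1) ^ n = dualMap ((h - 1) ^ n) := by
  induction n with
  | zero => rfl
  | succ n ih =>
    rw [pow_succ', pow_succ, ih]
    ext φ x
    simp

theorem stmt2_general {K V : Type*} [Field K] [CharZero K] [AddCommGroup V] [Module K V]
    {T : V →ₗ[K] V →ₗ[K] V →ₗ[K] K} (hT : HodgeIndex T) {g : V ≃ₗ[K] V}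
    (hgT : ∀ u v w, T (g u) (g v) (g w) = T u v w) {k : ℕ}
    (hNk : ((g : End K V) - 1) ^ k = 0)
    (hkmin : ∀ m : ℕ, 0 < m → ((g : End K V) - 1) ^ m = 0 → k ≤ m)
    {j : ℕ} (hkj : k ≤ 2 * j) (hjk : j ≤ k) :
    (((g : End K V) - 1) ^ j).rank = (k - j : ℕ) := by
  have inv_nilpotent : ((g.symm : End K V) - 1) ^ k = 0 :=
    inv_sub_one_pow_eq_zero (u := (GeneralLinearGroup.generalLinearEquiv K V).symm g) hNk
  have dual_nilpotent : ((dualMap (g.symm : End K V) : End K (Dual K V)) - 1) ^ k = 0 := by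
    rw [dualMap_sub_one_pow, inv_nilpotent]
    exact map_zero Dual.transpose
  have : IsAddTorsionFree (Dual K V) := .of_isTorsionFree K _
  refine hT.rank_sub_one_pow_eq (fun x y ↦ ?_) hNk dual_nilpotent hkmin hkj hjk
  ext w
  simpa using hgT x y (g.symm w)

/-- abstract form of Proposition 3.3: in the Hodge-index setting, a non-trivial
unipotent `T`-preserving automorphism `g` with `N = g - id`, `N^k = 0`, `k ≥ 2` minimal, has
`rank N^(k-1) = 1` and `rank N^j = k - j` whenever `k + 1 ≤ 2j ≤ 2k`: `g` has a unique Jordan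
block of maximal dimension `k` and all other Jordan blocks have dimension at most `(k+1)/2`. -/
theorem stmt2 (V : Type*) [AddCommGroup V] [Module ℝ V] [FiniteDimensional ℝ V]
    (T : V →ₗ[ℝ] V →ₗ[ℝ] V →ₗ[ℝ] ℝ)
    (hT1 : ∀ u v w, T u v w = T v u w)
    (hT2 : ∀ u v w, T u v w = T u w v)
    (hHodge : ∀ u v : V, LinearIndependent ℝ ![u, v] →
      ∃ w, T u u w ≠ 0 ∨ T u v w ≠ 0 ∨ T v v w ≠ 0)
    (g : V ≃ₗ[ℝ] V)
    (hgT : ∀ u v w, T (g u) (g v) (g w) = T u v w)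
    (hunip : ((g : Module.End ℝ V) - 1) ^ (Module.finrank ℝ V) = 0)
    (hne : (g : Module.End ℝ V) ≠ 1)
    (k : ℕ) (hk : 2 ≤ k)
    (hNk : ((g : Module.End ℝ V) - 1) ^ k = 0)
    (hkmin : ∀ m : ℕ, 0 < m → ((g : Module.End ℝ V) - 1) ^ m = 0 → k ≤ m) :
    Module.finrank ℝ (LinearMap.range (((g : Module.End ℝ V) - 1) ^ (k - 1))) = 1 ∧
    ∀ j : ℕ, k + 1 ≤ 2 * j → j ≤ k →
      Module.finrank ℝ (LinearMap.range (((g : Module.End ℝ V) - 1) ^ j)) = k - j := by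
  have hodge : HodgeIndex T := hodgeIndex_of_linearIndependent_pair
    fun u v huv ⟨hTuu, hTuv, hTvv⟩ ↦ by simpa [hTuu, hTuv, hTvv] using hHodge u v huv
  have rank_eq {j : ℕ} (hkj : k ≤ 2 * j) (hjk : j ≤ k) :=
    finrank_eq_of_rank_eq (stmt2_general hodge hgT hNk hkmin hkj hjk)
  exact ⟨(rank_eq (by lia) (by lia)).trans (by lia), fun j hkj hjk ↦ rank_eq (by lia) hjk⟩
end

section
/- Suppose λ, λ' ∈ ℂ are such that either λ ≠ λ' and both are eigenvalues of g, or λ = λ' is an eigenvalue of g whose eigenspace has dimension at least 2. If the Hodge-index condition holds for (T, σ), then at least one of the three complex numbers (λ·conj(λ))⁻¹, (λ·conj(λ'))⁻¹, (λ'·conj(λ'))⁻¹ is an eigenvalue of g. -/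
/-! If `u` and `v` are eigenvectors of `g` with eigenvalues `l` and `l'`, then `σ v` is an
eigenvector with eigenvalue `conj l'`, so invariance of `T` gives
`T(u, σ v, g ·) = c • T(u, σ v, ·)` for `c = (l * conj l')⁻¹`. A nonzero form with this property
kills the range of `g - c`, so `g - c` is not surjective and `c` is an eigenvalue. The Hodge-index
condition, applied to two independent eigenvectors, makes one of the three forms of this kind
nonzero. -/

section Eigenspaces

open Module Module.End

section CommRing

variable {R M : Type*} [CommRing R] [AddCommGroup M] [Module R M] {f : End R M}

theorem map_mem_eigenspace_of_intertwining {S N : Type*} [CommRing S] [AddCommGroup N] [Module S N]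
    {τ : R →+* S} {f' : End S N} {σ : M →ₛₗ[τ] N} (hσ : ∀ x, f' (σ x) = σ (f x)) {a : R} {x : M}
    (hx : x ∈ f.eigenspace a) : σ x ∈ f'.eigenspace (τ a) := by
  rw [mem_eigenspace_iff, hσ, mem_eigenspace_iff.mp hx, map_smulₛₗ]

theorem hasEigenvalue_of_comp_eq_smul {N : Type*} [AddCommGroup N] [Module R N] [IsArtinian R M]
    {φ : M →ₗ[R] N} {c : R} (hφ : φ ≠ 0) (hφf : φ ∘ₗ f = c • φ) :
    f.HasEigenvalue c := by
  rw [hasEigenvalue_iff, eigenspace_def]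
  intro hker
  have hsurj : Function.Surjective (f - algebraMap R (End R M) c) :=
    IsArtinian.surjective_of_injective_endomorphism _ (LinearMap.ker_eq_bot.mp hker)
  have hcomp : φ ∘ₗ (f - algebraMap R (End R M) c) = 0 := by
    rw [LinearMap.comp_sub, hφf, sub_eq_zero]
    ext x
    simp
  exact hφ <| (LinearMap.cancel_right hsurj).mp <| hcomp.trans (LinearMap.zero_comp _).symm

theorem exists_linearIndependent_pair_mem_eigenspace_of_ne [IsDomain R] [IsTorsionFree R M]
    {a b : R} (hab : a ≠ b) (ha : f.HasEigenvalue a) (hb : f.HasEigenvalue b) :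
    ∃ u ∈ f.eigenspace a, ∃ v ∈ f.eigenspace b, LinearIndependent R ![u, v] := by
  obtain ⟨u, hu⟩ := ha.exists_hasEigenvector
  obtain ⟨v, hv⟩ := hb.exists_hasEigenvector
  have hinj : Function.Injective ![a, b] := by
    simpa [Function.Injective, Fin.forall_fin_two] using ⟨hab, hab.symm⟩
  exact ⟨u, hu.1, v, hv.1,
    eigenvectors_linearIndependent' f ![a, b] hinj ![u, v] (Fin.forall_fin_two.mpr ⟨hu, hv⟩)⟩

end CommRing

theorem exists_linearIndependent_pair_mem_of_two_le_finrank {R M : Type*} [Semiring R]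
    [AddCommMonoid M] [Module R M] {p : Submodule R M} (hp : 2 ≤ finrank R p) :
    ∃ u ∈ p, ∃ v ∈ p, LinearIndependent R ![u, v] := by
  obtain ⟨s, hs⟩ := exists_linearIndependent_of_le_finrank hp
  refine ⟨s 0, (s 0).2, s 1, (s 1).2, ?_⟩
  have hcoe : p.subtype ∘ s = ![(s 0 : M), (s 1 : M)] := by
    ext i
    fin_cases i <;> rfl
  exact hcoe ▸ hs.map_injOn p.subtype p.injective_subtype.injOn

theorem hasEigenvalue_inv_mul_of_trilinear_ne_zero {K V W : Type*} [Field K] [AddCommGroup V]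
    [Module K V] [FiniteDimensional K V] [AddCommGroup W] [Module K W] {f : End K V}
    {T : V →ₗ[K] V →ₗ[K] V →ₗ[K] W} (hfT : ∀ u v w, T (f u) (f v) (f w) = T u v w)
    {a b : K} {u v : V} (hu : u ∈ f.eigenspace a) (hv : v ∈ f.eigenspace b) (hT : T u v ≠ 0) :
    f.HasEigenvalue (a * b)⁻¹ := by
  have hsmul : (a * b) • (T u v ∘ₗ f) = T u v := by
    ext w
    rw [← hfT u v w, mem_eigenspace_iff.mp hu, mem_eigenspace_iff.mp hv]
    simp [mul_smul, smul_comm a b]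
  have hab : a * b ≠ 0 := fun h0 ↦ hT <| by rw [← hsmul, h0, zero_smul]
  exact hasEigenvalue_of_comp_eq_smul hT <| (eq_inv_smul_iff₀ hab).mpr hsmul

theorem stmt3_general {K V W : Type*} [Field K] [AddCommGroup V] [Module K V]
    [FiniteDimensional K V] [AddCommGroup W] [Module K W] {τ : K →+* K} {σ : V →ₛₗ[τ] V}
    {T : V →ₗ[K] V →ₗ[K] V →ₗ[K] W} {f : End K V} (hfσ : ∀ v, f (σ v) = σ (f v))
    (hfT : ∀ u v w, T (f u) (f v) (f w) = T u v w)
    (hHodge : ∀ u v : V, LinearIndependent K ![u, v] →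
      ∃ w, T u (σ u) w ≠ 0 ∨ T u (σ v) w ≠ 0 ∨ T v (σ v) w ≠ 0)
    {a b : K}
    (h : (a ≠ b ∧ f.HasEigenvalue a ∧ f.HasEigenvalue b) ∨
      (a = b ∧ 2 ≤ finrank K (f.eigenspace a))) :
    f.HasEigenvalue (a * τ a)⁻¹ ∨ f.HasEigenvalue (a * τ b)⁻¹ ∨ f.HasEigenvalue (b * τ b)⁻¹ := by
  obtain ⟨u, hu, v, hv, hindep⟩ :
      ∃ u ∈ f.eigenspace a, ∃ v ∈ f.eigenspace b, LinearIndependent K ![u, v] := by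
    rcases h with ⟨hab, ha, hb⟩ | ⟨rfl, hdim⟩
    · exact exists_linearIndependent_pair_mem_eigenspace_of_ne hab ha hb
    · exact exists_linearIndependent_pair_mem_of_two_le_finrank hdim
  have hcontract {c d : K} {x y w : V} (hx : x ∈ f.eigenspace c) (hy : y ∈ f.eigenspace d)
      (hw : T x (σ y) w ≠ 0) : f.HasEigenvalue (c * τ d)⁻¹ :=
    hasEigenvalue_inv_mul_of_trilinear_ne_zero hfT hx (map_mem_eigenspace_of_intertwining hfσ hy)
      fun h0 ↦ hw <| by rw [h0, LinearMap.zero_apply]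
  obtain ⟨w, huu | huv | hvv⟩ := hHodge u v hindep
  · exact .inl (hcontract hu hu huu)
  · exact .inr (.inl (hcontract hu hv huv))
  · exact .inr (.inr (hcontract hv hv hvv))

end Eigenspaces

/-- abstract form of the Key Lemma 4.1: in the complex Hodge-index setting,
if `l, l'` are distinct eigenvalues of `g` (or `l = l'` is an eigenvalue with eigenspace of
dimension at least 2), then one of `(l·conj l)⁻¹`, `(l·conj l')⁻¹`, `(l'·conj l')⁻¹` is an
eigenvalue of `g`. -/
theorem stmt3 (V : Type*) [AddCommGroup V] [Module ℂ V] [FiniteDimensional ℂ V]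
    (σ : V →ₛₗ[starRingEnd ℂ] V) (hσ : ∀ v, σ (σ v) = v)
    (T : V →ₗ[ℂ] V →ₗ[ℂ] V →ₗ[ℂ] ℂ)
    (hT1 : ∀ u v w, T u v w = T v u w)
    (hT2 : ∀ u v w, T u v w = T u w v)
    (g : V ≃ₗ[ℂ] V)
    (hgσ : ∀ v, g (σ v) = σ (g v))
    (hgT : ∀ u v w, T (g u) (g v) (g w) = T u v w)
    (hHodge : ∀ u v : V, LinearIndependent ℂ ![u, v] →
      ∃ w, T u (σ u) w ≠ 0 ∨ T u (σ v) w ≠ 0 ∨ T v (σ v) w ≠ 0)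
    (l l' : ℂ)
    (h : (l ≠ l' ∧ Module.End.HasEigenvalue (g : Module.End ℂ V) l ∧
            Module.End.HasEigenvalue (g : Module.End ℂ V) l') ∨
         (l = l' ∧ 2 ≤ Module.finrank ℂ (Module.End.eigenspace (g : Module.End ℂ V) l))) :
    Module.End.HasEigenvalue (g : Module.End ℂ V) (l * (starRingEnd ℂ) l)⁻¹ ∨
    Module.End.HasEigenvalue (g : Module.End ℂ V) (l * (starRingEnd ℂ) l')⁻¹ ∨
    Module.End.HasEigenvalue (g : Module.End ℂ V) (l' * (starRingEnd ℂ) l')⁻¹ :=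
  stmt3_general hgσ hgT hHodge h
end

section
/- Let E be a real vector space of finite dimension r ≥ 1 and let W be a finite subset of E that spans E. Then there exist elements w₁, …, w_r of W and linear functionals α₁, …, α_r on E such that: (w₁, …, w_r) is a basis of E; (α₁, …, α_r) is a basis of the dual space E^∨; for each i, |α_i(w_i)| = max over w ∈ W of |α_i(w)|; and α_i(w_j) = 0 whenever i > j. -/
/-!
Choose the pairs `(wᵢ, αᵢ)` greedily: as long as `w₁, …, wₙ` do not span `E`, some nonzero
functional `αₙ₊₁` kills all of them, and a point `wₙ₊₁` of `W` at which `|αₙ₊₁|` is maximal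
satisfies `αₙ₊₁ wₙ₊₁ ≠ 0`, because `W` spans `E`. The matrix `(αᵢ wⱼ)` is then triangular with
nonzero diagonal entries, which makes both families linearly independent.
-/

open Module Submodule

section Triangular

variable {ι R M : Type*} [LinearOrder ι] [CommRing R] [NoZeroDivisors R]
  [AddCommGroup M] [Module R M] {w : ι → M} {α : ι → Dual R M}

theorem linearIndependent_of_dual_apply_eq_zero_of_lt (hne : ∀ i, α i (w i) ≠ 0)
    (hzero : ∀ i j, j < i → α i (w j) = 0) : LinearIndependent R w := by
  rw [linearIndependent_iff]
  intro c hc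
  by_contra hc0
  have hsupp : c.support.Nonempty := Finsupp.support_nonempty_iff.mpr hc0
  set m := c.support.max' hsupp
  have hm : m ∈ c.support := c.support.max'_mem hsupp
  have happly : α m (Finsupp.linearCombination R w c) = c m * α m (w m) := by
    rw [Finsupp.linearCombination_apply, Finsupp.sum, map_sum,
      Finset.sum_eq_single_of_mem m hm, map_smul, smul_eq_mul]
    intro j hj hjm
    rw [map_smul, hzero m j ((c.support.le_max' j hj).lt_of_ne hjm), smul_zero]
  rw [hc, map_zero] at happly
  exact mul_ne_zero (Finsupp.mem_support_iff.mp hm) (hne m) happly.symm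

/- Reversing the order of `ι` and regarding vectors as functionals on the dual exchanges the two
families. -/
theorem linearIndependent_dual_of_apply_eq_zero_of_lt (hne : ∀ i, α i (w i) ≠ 0)
    (hzero : ∀ i j, j < i → α i (w j) = 0) : LinearIndependent R α :=
  linearIndependent_of_dual_apply_eq_zero_of_lt (ι := ιᵒᵈ) (α := fun i ↦ Dual.eval R M (w i))
    hne fun i j hji ↦ hzero j i hji

end Triangular

theorem nonempty_of_span_eq_top {R M : Type*} [Semiring R] [AddCommMonoid M] [Module R M]
    [Nontrivial M] {s : Set M} (hspan : span R s = ⊤) : s.Nonempty := by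
  rw [Set.nonempty_iff_ne_empty]
  rintro rfl
  exact bot_ne_top (span_empty.symm.trans hspan)

theorem apply_ne_zero_of_forall_le_of_span_eq_top {R S M : Type*} [CommSemiring R] [Semiring S]
    [PartialOrder S] [AddCommMonoid M] [Module R M] {v : AbsoluteValue R S} {W : Set M}
    (hspan : span R W = ⊤) {f : Dual R M} (hf : f ≠ 0) {x : M}
    (hmax : ∀ y ∈ W, v (f y) ≤ v (f x)) : f x ≠ 0 := by
  intro hfx
  refine hf (LinearMap.ext_on hspan fun y hy ↦ ?_)
  have hle : v (f y) ≤ 0 := by simpa only [hfx, map_zero] using hmax y hy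
  exact v.nonpos_iff.mp hle

theorem exists_dual_ne_zero_forall_apply_eq_zero {ι K E : Type*} [Fintype ι] [Field K]
    [AddCommGroup E] [Module K E] (hcard : Fintype.card ι < finrank K E) (w : ι → E) :
    ∃ f : Dual K E, f ≠ 0 ∧ ∀ i, f (w i) = 0 := by
  have hlt : span K (Set.range w) < ⊤ :=
    lt_top_iff_ne_top.mpr fun htop ↦ (finrank_le_of_span_eq_top htop).not_gt hcard
  obtain ⟨f, hf, hker⟩ := exists_le_ker_of_lt_top _ hlt
  exact ⟨f, hf, fun i ↦ hker (subset_span (Set.mem_range_self i))⟩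

/-- A family of vectors `w i ∈ W` and a family of functionals `α i` are adapted to `W` if each
`w i` is `α i`-maximal in `W` and the matrix `(α i (w j))` is triangular with nonzero diagonal.
The nonvanishing of the diagonal replaces the requirement that `w` and `α` be bases, so that the
notion also applies to families shorter than the dimension. -/
structure IsAdapted {ι K S E : Type*} [LT ι] [CommSemiring K] [Semiring S] [PartialOrder S]
    [AddCommMonoid E] [Module K E] (v : AbsoluteValue K S) (W : Set E) (w : ι → E)
    (α : ι → Dual K E) : Prop where
  mem : ∀ i, w i ∈ W
  apply_le : ∀ i, ∀ x ∈ W, v (α i x) ≤ v (α i (w i))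
  apply_self_ne_zero : ∀ i, α i (w i) ≠ 0
  apply_eq_zero_of_lt : ∀ i j, j < i → α i (w j) = 0

theorem IsAdapted.snoc {K S E : Type*} [CommSemiring K] [Semiring S] [PartialOrder S]
    [AddCommMonoid E] [Module K E] {v : AbsoluteValue K S} {W : Set E} {n : ℕ} {w : Fin n → E}
    {α : Fin n → Dual K E} (h : IsAdapted v W w α) {x : E} (hx : x ∈ W) {f : Dual K E}
    (hmax : ∀ y ∈ W, v (f y) ≤ v (f x)) (hfx : f x ≠ 0) (hfw : ∀ i, f (w i) = 0) :
    IsAdapted v W (Fin.snoc w x : Fin (n + 1) → E) (Fin.snoc α f : Fin (n + 1) → Dual K E) where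
  mem := by simpa [Fin.forall_fin_succ'] using ⟨h.mem, hx⟩
  apply_le := by simpa [Fin.forall_fin_succ'] using ⟨h.apply_le, hmax⟩
  apply_self_ne_zero := by simpa [Fin.forall_fin_succ'] using ⟨h.apply_self_ne_zero, hfx⟩
  apply_eq_zero_of_lt := by
    simpa [Fin.forall_fin_succ', (Fin.le_last _).not_gt] using ⟨h.apply_eq_zero_of_lt, hfw⟩

section Existence

variable {K S E : Type*} [Field K] [Semiring S] [PartialOrder S] [AddCommGroup E] [Module K E]
  (v : AbsoluteValue K S) {W : Set E}

theorem exists_isAdapted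
    (hmax : ∀ f : Dual K E, f ≠ 0 → ∃ x ∈ W, ∀ y ∈ W, v (f y) ≤ v (f x))
    (hspan : span K W = ⊤) {n : ℕ} (hn : n ≤ finrank K E) :
    ∃ (w : Fin n → E) (α : Fin n → Dual K E), IsAdapted v W w α := by
  induction n with
  | zero => exact ⟨Fin.elim0, Fin.elim0, by constructor <;> exact fun i ↦ i.elim0⟩
  | succ n ih =>
    obtain ⟨w, α, h⟩ := ih (Nat.le_of_succ_le hn)
    obtain ⟨f, hf, hfw⟩ := exists_dual_ne_zero_forall_apply_eq_zero (by rwa [Fintype.card_fin]) w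
    obtain ⟨x, hx, hfmax⟩ := hmax f hf
    have hfx : f x ≠ 0 := apply_ne_zero_of_forall_le_of_span_eq_top hspan hf hfmax
    exact ⟨_, _, h.snoc hx hfmax hfx hfw⟩

theorem stmt16_general [FiniteDimensional K E] {r : ℕ} (hrank : finrank K E = r)
    (hmax : ∀ f : Dual K E, f ≠ 0 → ∃ x ∈ W, ∀ y ∈ W, v (f y) ≤ v (f x))
    (hspan : span K W = ⊤) :
    ∃ (w : Fin r → E) (α : Fin r → Dual K E),
      (∀ i, w i ∈ W) ∧
      LinearIndependent K w ∧ span K (Set.range w) = ⊤ ∧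
      LinearIndependent K α ∧ span K (Set.range α) = ⊤ ∧
      (∀ i, ∀ x ∈ W, v (α i x) ≤ v (α i (w i))) ∧
      (∀ i j : Fin r, j < i → α i (w j) = 0) := by
  obtain ⟨w, α, h⟩ := exists_isAdapted v hmax hspan hrank.ge
  have hw : LinearIndependent K w :=
    linearIndependent_of_dual_apply_eq_zero_of_lt h.apply_self_ne_zero h.apply_eq_zero_of_lt
  have hα : LinearIndependent K α :=
    linearIndependent_dual_of_apply_eq_zero_of_lt h.apply_self_ne_zero h.apply_eq_zero_of_lt
  have hw_card : Fintype.card (Fin r) = finrank K E := by rw [Fintype.card_fin, hrank]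
  have hα_card : Fintype.card (Fin r) = finrank K (Dual K E) := by
    rw [Subspace.dual_finrank_eq, hw_card]
  exact ⟨w, α, h.mem, hw, hw.span_eq_top_of_card_eq_finrank' hw_card,
    hα, hα.span_eq_top_of_card_eq_finrank' hα_card,
    h.apply_le, h.apply_eq_zero_of_lt⟩

end Existence

/-- Lemma 4.4, existence of an adapted basis: if `W` is a finite spanning
subset of a real vector space `E` of dimension `r ≥ 1`, there are `w₁, …, w_r ∈ W` forming a
basis of `E` and a basis `α₁, …, α_r` of the dual space such that each `w_i` is
`α_i`-maximal in `W` and `α_i (w_j) = 0` whenever `i > j`. -/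
theorem stmt16 (E : Type*) [AddCommGroup E] [Module ℝ E] [FiniteDimensional ℝ E]
    (r : ℕ) (hr : 1 ≤ r) (hrank : Module.finrank ℝ E = r)
    (W : Finset E) (hspan : Submodule.span ℝ (W : Set E) = ⊤) :
    ∃ (w : Fin r → E) (α : Fin r → Module.Dual ℝ E),
      (∀ i, w i ∈ W) ∧
      LinearIndependent ℝ w ∧ Submodule.span ℝ (Set.range w) = ⊤ ∧
      LinearIndependent ℝ α ∧ Submodule.span ℝ (Set.range α) = ⊤ ∧
      (∀ i, ∀ x ∈ W, |α i x| ≤ |α i (w i)|) ∧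
      (∀ i j : Fin r, j < i → α i (w j) = 0) := by
  have : Nontrivial E := nontrivial_of_finrank_pos (R := ℝ) (hrank ▸ hr)
  exact stmt16_general AbsoluteValue.abs hrank
    (fun _ _ ↦ W.exists_max_image _ (nonempty_of_span_eq_top hspan)) hspan
end

section
/- Let E be a real vector space, ι a finite index set, and w : ι → E a family of vectors with the following property: for any two distinct indices i ≠ j in ι, at least one of the three vectors −2·w(i), −(w(i) + w(j)), −2·w(j) belongs to the image {w(l) : l ∈ ι}. Then the linear span of {w(l) : l ∈ ι} has dimension at most 2. -/
/-!
The rational span of `S` has at least the dimension of the span over any larger field, so one may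
work over the ordered field `ℚ`. Let `b` be a basis contained in `S` whose determinant is largest
in absolute value; by Cramer's rule every vector of `S` has coordinates in `[-1, 1]` with respect
to `b`. Two vectors of `S` with a common `i`-th coordinate `±1` are equal, since each of the three
negated sums they produce has `i`-th coordinate `∓2`. For the same reason `-(2 b i)` is never in
`S`, so `-(b i + b j) ∈ S` whenever `i ≠ j`. If `i`, `j`, `k` were distinct, then `-(b i + b j)`
and `-(b i + b k)` would share the `i`-th coordinate `-1`, forcing `b j = b k`.
-/

open Module

/-- The condition that the Key Lemma imposes on a set `S` of weights. The vector `-2u` is written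
`-(u + u)`, which makes the condition independent of any field of scalars. -/
def PairwiseNegAddMem {G : Type*} [Add G] [Neg G] (S : Set G) : Prop :=
  S.Pairwise fun u v => -(u + u) ∈ S ∨ -(u + v) ∈ S ∨ -(v + v) ∈ S

theorem PairwiseNegAddMem.preimage {G H F : Type*} [AddGroup G] [AddGroup H] [FunLike F G H]
    [AddMonoidHomClass F G H] {S : Set H} (hS : PairwiseNegAddMem S) {f : F}
    (hf : Function.Injective f) : PairwiseNegAddMem (f ⁻¹' S) := by
  intro u hu v hv huv
  simpa only [Set.mem_preimage, map_neg, map_add] using hS hu hv (hf.ne huv)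

section BoundedFunctional

variable {G A F : Type*} [AddGroup G] [AddCommGroup A] [LinearOrder A] [IsOrderedAddMonoid A]
  [FunLike F G A] [AddMonoidHomClass F G A] {S : Set G} {f : F} {c : A} {u v : G}

theorem neg_add_notMem_of_abs_map_le (hf : ∀ s ∈ S, |f s| ≤ c) (hc : 0 < c)
    (hu : |f u| = c) (huv : f u = f v) : -(u + v) ∉ S := by
  intro hmem
  have habs : |f (-(u + v))| = c + c := by
    rw [map_neg, map_add, ← huv, abs_neg, ← two_nsmul, abs_nsmul, hu, two_nsmul]
  exact (lt_add_of_pos_left c hc).not_ge (habs ▸ hf _ hmem)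

theorem PairwiseNegAddMem.eq_of_map_eq (hS : PairwiseNegAddMem S) (hf : ∀ s ∈ S, |f s| ≤ c)
    (hc : 0 < c) (hu : u ∈ S) (hv : v ∈ S)
    (hfu : |f u| = c) (huv : f u = f v) : u = v := by
  by_contra hne
  rcases hS hu hv hne with h | h | h
  · exact neg_add_notMem_of_abs_map_le hf hc hfu rfl h
  · exact neg_add_notMem_of_abs_map_le hf hc hfu huv h
  · exact neg_add_notMem_of_abs_map_le hf hc (huv ▸ hfu) rfl h

theorem PairwiseNegAddMem.neg_add_mem {g : F} (hS : PairwiseNegAddMem S) (hf : ∀ s ∈ S, |f s| ≤ c)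
    (hg : ∀ s ∈ S, |g s| ≤ c) (hc : 0 < c) (hu : u ∈ S) (hv : v ∈ S) (hne : u ≠ v)
    (hfu : |f u| = c) (hgv : |g v| = c) : -(u + v) ∈ S :=
  ((hS hu hv hne).resolve_left (neg_add_notMem_of_abs_map_le hf hc hfu rfl)).resolve_right
    (neg_add_notMem_of_abs_map_le hg hc hgv rfl)

end BoundedFunctional

theorem PairwiseNegAddMem.card_le_two {R M ι : Type*} [Ring R] [LinearOrder R]
    [IsStrictOrderedRing R] [AddCommGroup M] [Module R M] [Fintype ι] {S : Set M}
    (hS : PairwiseNegAddMem S) (b : Basis ι R M) (hb : ∀ i, b i ∈ S)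
    (hcoord : ∀ v ∈ S, ∀ i, |b.coord i v| ≤ 1) :
    Fintype.card ι ≤ 2 := by
  by_contra! hcard
  obtain ⟨i, j, k, hij, hik, hjk⟩ := Fintype.two_lt_card_iff.mp hcard
  have hbound (l : ι) : ∀ v ∈ S, |b.coord l v| ≤ 1 := fun v hv => hcoord v hv l
  have hself (l : ι) : |b.coord l (b l)| = 1 := by simp
  have hmem {l l' : ι} (hne : l ≠ l') : -(b l + b l') ∈ S :=
    hS.neg_add_mem (hbound l) (hbound l') zero_lt_one (hb l) (hb l') (b.injective.ne hne)
      (hself l) (hself l')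
  have hcoord_i {l : ι} (hne : i ≠ l) : b.coord i (-(b i + b l)) = -1 := by
    simp [hne.symm]
  have heq : -(b i + b j) = -(b i + b k) :=
    hS.eq_of_map_eq (hbound i) zero_lt_one (hmem hij) (hmem hik)
      (by rw [hcoord_i hij, abs_neg, abs_one]) (by rw [hcoord_i hij, hcoord_i hik])
  exact hjk (b.injective (add_left_cancel (neg_injective heq)))

section OrderedField

variable {K V : Type*} [Field K] [LinearOrder K] [IsStrictOrderedRing K] [AddCommGroup V]
  [Module K V] {S : Set V}

theorem exists_basis_abs_coord_le_one {ι : Type*} [Finite ι] (hS : S.Finite)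
    (e : Basis ι K V) (he : ∀ i, e i ∈ S) :
    ∃ b : Basis ι K V, (∀ i, b i ∈ S) ∧ ∀ v ∈ S, ∀ i, |b.coord i v| ≤ 1 := by
  classical
  have := Fintype.ofFinite ι
  obtain ⟨m, hm, hmax⟩ := Set.exists_max_image {m : ι → V | ∀ i, m i ∈ S} (fun m => |e.det m|)
    (Set.Finite.pi' fun _ => hS) ⟨e, he⟩
  have hdet : 0 < |e.det m| := by
    have hle : |e.det e| ≤ |e.det m| := hmax e he
    rw [e.det_self, abs_one] at hle
    exact zero_lt_one.trans_le hle
  obtain ⟨hli, hspan⟩ := e.is_basis_iff_det.mpr (abs_pos.mp hdet).isUnit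
  refine ⟨Basis.mk hli hspan.ge, fun i => ?_, fun v hv i => ?_⟩
  · simpa only [Basis.mk_apply] using hm i
  have hcramer : e.det m * (Basis.mk hli hspan.ge).coord i v = e.det (Function.update m i v) :=
    DFunLike.congr_fun (e.det_smul_mk_coord_eq_det_update hli hspan.ge i) v
  have hupdate : ∀ l, Function.update m i v l ∈ S :=
    (Function.forall_update_iff m fun _ x => x ∈ S).mpr ⟨hv, fun l _ => hm l⟩
  refine le_of_mul_le_mul_left ?_ hdet
  rw [← abs_mul, hcramer, mul_one]
  exact hmax _ hupdate

theorem PairwiseNegAddMem.finrank_le_two_of_span_eq_top (hS : PairwiseNegAddMem S) (hfin : S.Finite)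
    (hspan : Submodule.span K S = ⊤) : finrank K V ≤ 2 := by
  have := FiniteDimensional.span_of_finite K hfin
  obtain ⟨e, he, hspan_e, hli⟩ := Submodule.exists_fun_fin_finrank_span_eq K S
  obtain ⟨b, hb, hcoord⟩ := exists_basis_abs_coord_le_one hfin
    (Basis.mk hli (hspan_e.trans hspan).ge) (by simpa only [Basis.mk_apply] using he)
  exact (finrank_eq_card_basis b).trans_le (hS.card_le_two b hb hcoord)

end OrderedField

theorem finrank_span_le_finrank_span_of_isScalarTower (F : Type*) {K E : Type*} [DivisionRing F]
    [DivisionRing K] [AddCommGroup E] [Module F K] [Module K E] [Module F E] [IsScalarTower F K E]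
    (S : Set E) [Module.Finite F (Submodule.span F S)] :
    finrank K (Submodule.span K S) ≤ finrank F (Submodule.span F S) := by
  obtain ⟨e, -, hspan, -⟩ := Submodule.exists_fun_fin_finrank_span_eq F S
  have hsub : S ⊆ Submodule.span F (Set.range e) := by
    rw [hspan]
    exact Submodule.subset_span
  have hle : Submodule.span K S ≤ Submodule.span K (Set.range e) :=
    Submodule.span_le.mpr (hsub.trans (Submodule.span_subset_span F K _))
  have := FiniteDimensional.span_of_finite K (Set.finite_range e)
  calc finrank K (Submodule.span K S) ≤ finrank K (Submodule.span K (Set.range e)) :=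
        Submodule.finrank_mono hle
    _ ≤ Fintype.card (Fin (finrank F (Submodule.span F S))) := finrank_range_le_card e
    _ = finrank F (Submodule.span F S) := Fintype.card_fin _

theorem stmt17_general {K E : Type*} [DivisionRing K] [CharZero K] [AddCommGroup E] [Module K E]
    {S : Set E} (hfin : S.Finite) (hS : PairwiseNegAddMem S) :
    finrank K (Submodule.span K S) ≤ 2 := by
  let : Module ℚ E := Module.compHom E (algebraMap ℚ K)
  have := FiniteDimensional.span_of_finite ℚ hfin
  let W := Submodule.span ℚ S
  have hrat : finrank ℚ W ≤ 2 :=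
    (hS.preimage W.injective_subtype).finrank_le_two_of_span_eq_top
      (hfin.preimage W.injective_subtype.injOn) Submodule.span_span_coe_preimage
  exact (finrank_span_le_finrank_span_of_isScalarTower ℚ S).trans hrat

/-- combinatorial content of Lemma 4.6, "the split-rank is at most 2": if
`w : ι → E` is a finite family of vectors in a real vector space such that for any two
distinct indices `i ≠ j` at least one of `-2·w i`, `-(w i + w j)`, `-2·w j` lies in the image
of `w`, then the span of the image of `w` has dimension at most 2. -/
theorem stmt17 (E : Type*) [AddCommGroup E] [Module ℝ E]
    (ι : Type*) [Fintype ι] (w : ι → E)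
    (h : ∀ i j : ι, i ≠ j →
      ((-2 : ℝ) • w i ∈ Set.range w ∨ -(w i + w j) ∈ Set.range w ∨
        (-2 : ℝ) • w j ∈ Set.range w)) :
    Module.finrank ℝ (Submodule.span ℝ (Set.range w)) ≤ 2 := by
  refine stmt17_general (Set.finite_range w) ?_
  rintro _ ⟨i, rfl⟩ _ ⟨j, rfl⟩ hij
  simpa only [neg_smul, two_smul] using h i j (ne_of_apply_ne w hij)
end

section
/- Let V be a real vector space of finite even dimension 2n with n ≥ 1, and let f be a linear automorphism of V whose characteristic polynomial has 2n distinct complex roots, none of which is real. Then there exists a linear endomorphism J of V with J ∘ J = −id which commutes with f, i.e. f ∘ J = J ∘ f. -/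
/-! An annihilating polynomial `p` of `f` without real roots gives the finite-dimensional algebra
`A = ℝ[X] ⧸ (p)`, whose residue fields are finite extensions of `ℝ` other than `ℝ` itself, hence
copies of `ℂ`. So `-1` is a square in each residue field of `A`, therefore modulo the nilradical,
and by Newton's method in `A`: thus `p ∣ q ^ 2 + 1` for some `q`, and `J = q(f)` squares to `-1`. -/

open Polynomial

theorem isSquare_of_isNilpotent_sq_sub {R : Type*} [CommRing R] {u x : R} (h2 : IsUnit (2 : R))
    (hu : IsUnit u) (hx : IsNilpotent (x ^ 2 - u)) : IsSquare u := by
  have hx_unit : IsUnit x := by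
    have hsq : IsUnit (x ^ 2) := by
      simpa using hx.isUnit_add_left_of_commute hu (Commute.all _ _)
    exact (isUnit_pow_iff two_ne_zero).1 hsq
  obtain ⟨y, ⟨-, hy⟩, -⟩ := existsUnique_nilpotent_sub_and_aeval_eq_zero
    (P := X ^ 2 - C u) (x := x) (by simpa using hx)
    (by simpa [one_add_one_eq_two] using ⟨h2, hx_unit⟩)
  have hyu : y ^ 2 - u = 0 := by simpa using hy
  exact ⟨y, by rw [← sq, sub_eq_zero.1 hyu]⟩

theorem isSquare_of_forall_isSquare_quotient_maximal {R : Type*} [CommRing R] [IsArtinianRing R]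
    {u : R} (h2 : IsUnit (2 : R)) (hu : IsUnit u)
    (h : ∀ m : MaximalSpectrum R, IsSquare (Ideal.Quotient.mk m.asIdeal u)) : IsSquare u := by
  have hred : IsSquare (Ideal.Quotient.mk (nilradical R) u) := by
    choose y hy using h
    let e := IsArtinianRing.quotNilradicalEquivPi R
    refine ⟨e.symm y, e.injective ?_⟩
    rw [map_mul, e.apply_symm_apply]
    exact funext hy
  obtain ⟨y, hy⟩ := hred
  obtain ⟨x, rfl⟩ := Ideal.Quotient.mk_surjective y
  refine isSquare_of_isNilpotent_sq_sub (x := x) h2 hu (mem_nilradical.1 (Ideal.Quotient.eq.1 ?_))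
  rw [map_pow, sq, hy]

theorem isSquare_neg_one_of_isEmpty_algHom_real {A : Type*} [CommRing A] [Algebra ℝ A]
    [Module.Finite ℝ A] (hA : IsEmpty (A →ₐ[ℝ] ℝ)) : IsSquare (-1 : A) := by
  have : IsArtinianRing A := IsArtinianRing.of_finite ℝ A
  have h2 : IsUnit (2 : A) := by
    rw [← map_ofNat (algebraMap ℝ A) 2]
    exact (IsUnit.mk0 (2 : ℝ) two_ne_zero).map (algebraMap ℝ A)
  refine isSquare_of_forall_isSquare_quotient_maximal h2 isUnit_one.neg fun m => ?_
  let _ : Field (A ⧸ m.asIdeal) := Ideal.Quotient.field m.asIdeal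
  rcases Real.nonempty_algEquiv_or (A ⧸ m.asIdeal) with ⟨⟨e⟩⟩ | ⟨⟨e⟩⟩
  · exact hA.elim (e.toAlgHom.comp (Ideal.Quotient.mkₐ ℝ m.asIdeal))
  · rw [map_neg, map_one]
    exact ⟨e.symm Complex.I, by rw [← map_mul, Complex.I_mul_I, map_neg, map_one]⟩

theorem exists_dvd_sq_add_one_of_forall_not_isRoot {p : ℝ[X]} (hp : ∀ r, ¬ p.IsRoot r) :
    ∃ q : ℝ[X], p ∣ q ^ 2 + 1 := by
  have hp0 : p ≠ 0 := by
    rintro rfl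
    exact hp 0 eval_zero
  have : Module.Finite ℝ (AdjoinRoot p) := (AdjoinRoot.powerBasis hp0).finite
  have hempty : IsEmpty (AdjoinRoot p →ₐ[ℝ] ℝ) := by
    refine ⟨fun φ => hp (φ (AdjoinRoot.root p)) ?_⟩
    rw [IsRoot.def, ← coe_aeval_eq_eval, aeval_algHom_apply, AdjoinRoot.aeval_eq,
      AdjoinRoot.mk_self, map_zero]
  obtain ⟨y, hy⟩ := isSquare_neg_one_of_isEmpty_algHom_real hempty
  obtain ⟨q, rfl⟩ := AdjoinRoot.mk_surjective y
  refine ⟨q, AdjoinRoot.mk_eq_zero.1 ?_⟩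
  rw [map_add, map_pow, map_one, sq, ← hy, neg_add_cancel]

theorem stmt19_general {V : Type*} [AddCommGroup V] [Module ℝ V] (f : V →ₗ[ℝ] V) {p : ℝ[X]}
    (hpf : aeval f p = 0) (hp : ∀ r, ¬ p.IsRoot r) :
    ∃ J : V →ₗ[ℝ] V, J ∘ₗ J = -LinearMap.id ∧ f ∘ₗ J = J ∘ₗ f := by
  obtain ⟨q, hq⟩ := exists_dvd_sq_add_one_of_forall_not_isRoot hp
  have hsq : aeval f q ^ 2 + 1 = 0 := by
    simpa using aeval_eq_zero_of_dvd_aeval_eq_zero hq hpf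
  refine ⟨aeval f q, ?_, ?_⟩
  · rw [← Module.End.mul_eq_comp, ← sq]
    exact eq_neg_of_add_eq_zero_left hsq
  · exact Algebra.commute_of_mem_adjoin_self (aeval_mem_adjoin_singleton ℝ f)

/-- linear-algebra step in Lemma 5.13: a linear automorphism `f` of a real
vector space of dimension `2n` whose characteristic polynomial has `2n` distinct complex
roots, none real, commutes with some complex structure `J` (`J ∘ J = -id`). -/
theorem stmt19 (V : Type*) [AddCommGroup V] [Module ℝ V] [FiniteDimensional ℝ V]
    (n : ℕ) (hn : 1 ≤ n) (hdim : Module.finrank ℝ V = 2 * n)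
    (f : V ≃ₗ[ℝ] V)
    (hnodup : (((LinearMap.charpoly (f : V →ₗ[ℝ] V)).map (algebraMap ℝ ℂ)).roots).Nodup)
    (hcard : (((LinearMap.charpoly (f : V →ₗ[ℝ] V)).map (algebraMap ℝ ℂ)).roots).card = 2 * n)
    (hnonreal : ∀ z ∈ ((LinearMap.charpoly (f : V →ₗ[ℝ] V)).map (algebraMap ℝ ℂ)).roots,
      z.im ≠ 0) :
    ∃ J : V →ₗ[ℝ] V, J ∘ₗ J = -LinearMap.id ∧
      (f : V →ₗ[ℝ] V) ∘ₗ J = J ∘ₗ (f : V →ₗ[ℝ] V) := by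
  refine stmt19_general (f : V →ₗ[ℝ] V) (LinearMap.aeval_self_charpoly _) fun r hr => ?_
  exact hnonreal r ((mem_roots ((LinearMap.charpoly_monic _).map _).ne_zero).2 hr.map)
    (Complex.ofReal_im r)
end
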